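/- Let E be a real vector bundle of rank 3 over the sphere Sⁿ with n ≥ 3. If E admits a nowhere-zero section, then E is trivial. -/

import Mathlib

open Bundle

/-!
The section `s` is completed to a global frame, which is the same thing as a trivialization. Near
each point `s` is the first member of a frame. If this holds on two closed sets, the transition
matrix over their intersection has first row `(1, 0, 0)`, so gluing the frames amounts to extending
its `GL₂(ℝ)`-valued lower right block to the whole space. This is possible when the intersection is
connected and nowhere-zero complex functions on it have continuous logarithms, which is how
`π_{n-1}(SO(2)) = 0` enters. Compact convex sets have both properties, so cutting a hemisphere
into small convex cells gives a frame over it. The equator `Sⁿ⁻¹` has both properties as well: it is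
the union of two convex cells whose intersection `Sⁿ⁻²` is connected, as `n ≥ 3`. Hence the frames
over two opposite hemispheres can be glued too.
-/

theorem piecewise_eq_right_of_eq_on_inter {X : Type*} {Y : X → Type*} {A C : Set X}
    [DecidablePred (· ∈ A)] {f g : ∀ x, Y x} (h : ∀ x ∈ A ∩ C, f x = g x) :
    ∀ x ∈ C, A.piecewise f g x = g x := by
  intro x hx
  by_cases hA : x ∈ A
  · simpa only [hA, Set.piecewise_eq_of_mem] using h x ⟨hA, hx⟩
  · simp only [hA, not_false_eq_true, Set.piecewise_eq_of_notMem]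

section ContinuousLog

variable {X Y : Type*} [TopologicalSpace X] [TopologicalSpace Y]

/-- Every nowhere-vanishing continuous complex function on `X` has a continuous logarithm. For
reasonable spaces this says that `H¹(X; ℤ) = 0`, or that all maps from `X` to `SO(2)` are
null-homotopic. -/
def HasContinuousLog (X : Type*) [TopologicalSpace X] : Prop :=
  ∀ f : C(X, ℂ), (∀ x, f x ≠ 0) → ∃ g : C(X, ℂ), ∀ x, Complex.exp (g x) = f x

theorem exists_forall_eq_add_of_exp_eq_exp {K : Set X} (hK : IsPreconnected K) {f g : X → ℂ}
    (hf : ContinuousOn f K) (hg : ContinuousOn g K)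
    (hfg : ∀ x ∈ K, Complex.exp (f x) = Complex.exp (g x)) :
    ∃ c, Complex.exp c = 1 ∧ ∀ x ∈ K, f x = g x + c := by
  rcases K.eq_empty_or_nonempty with rfl | ⟨x₀, hx₀⟩
  · exact ⟨0, Complex.exp_zero, by simp⟩
  have hc : Complex.exp (f x₀ - g x₀) = 1 := by
    rw [Complex.exp_sub, hfg x₀ hx₀, div_self (Complex.exp_ne_zero _)]
  refine ⟨f x₀ - g x₀, hc, Complex.isCoveringMap_exp.eqOn_of_comp_eqOn hK hf
    (hg.add continuousOn_const) (fun x hx => Subtype.ext ?_) hx₀ (by simp)⟩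
  simp [Complex.exp_add, hc, hfg x hx]

namespace HasContinuousLog

theorem of_homeomorph (hX : HasContinuousLog X) (e : X ≃ₜ Y) : HasContinuousLog Y := by
  intro f hf
  obtain ⟨g, hg⟩ := hX (f.comp e) fun x => hf (e x)
  exact ⟨g.comp e.symm, fun y => by simpa using hg (e.symm y)⟩

theorem of_contractibleSpace [ContractibleSpace X] : HasContinuousLog X := by
  intro f hf
  obtain ⟨x₀, ⟨H⟩⟩ := id_nullhomotopic X
  let fH : C(unitInterval × X, {z : ℂ // z ≠ 0}) :=
    ⟨fun q => ⟨f (H.symm q), hf _⟩, by fun_prop⟩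
  have hfH₀ (x : X) : fH (0, x) = ⟨_, Complex.exp_ne_zero (Complex.log (f x₀))⟩ := by
    simp [fH, Complex.exp_log (hf x₀)]
  let G := Complex.isCoveringMap_exp.liftHomotopy fH (.const X (Complex.log (f x₀))) hfH₀
  have hG (q) : Complex.exp (G q) = f (H.symm q) :=
    congrArg Subtype.val (congrFun (Complex.isCoveringMap_exp.liftHomotopy_lifts fH _ hfH₀) q)
  exact ⟨⟨fun x => G (1, x), by fun_prop⟩, fun x => by simp [hG]⟩

theorem exists_continuousOn {K : Set X} (hK : HasContinuousLog K) {f : X → ℂ}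
    (hf : ContinuousOn f K) (hf₀ : ∀ x ∈ K, f x ≠ 0) :
    ∃ g : X → ℂ, ContinuousOn g K ∧ ∀ x ∈ K, Complex.exp (g x) = f x := by
  obtain ⟨g, hg⟩ := hK ⟨K.domRestrict f, hf.domRestrict⟩ fun x => hf₀ x x.2
  have hext (x : K) : Function.extend Subtype.val g 0 (x : X) = g x :=
    Subtype.val_injective.extend_apply g 0 x
  refine ⟨Function.extend Subtype.val g 0, ?_, fun x hx => (congrArg _ (hext ⟨x, hx⟩)).trans (hg _)⟩
  rw [continuousOn_iff_continuous_domRestrict]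
  exact g.continuous.congr fun x => (hext x).symm

theorem of_isClosed_union {A C : Set X} (hA : HasContinuousLog A) (hC : HasContinuousLog C)
    (hAc : IsClosed A) (hCc : IsClosed C) (hAC : IsPreconnected (A ∩ C)) (hu : A ∪ C = Set.univ) :
    HasContinuousLog X := by
  classical
  intro f hf
  obtain ⟨g, hg, hgf⟩ := hA.exists_continuousOn f.continuous.continuousOn fun x _ => hf x
  obtain ⟨k, hk, hkf⟩ := hC.exists_continuousOn f.continuous.continuousOn fun x _ => hf x
  obtain ⟨c, hc, hgk⟩ := exists_forall_eq_add_of_exp_eq_exp hAC (hg.mono Set.inter_subset_left)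
    (hk.mono Set.inter_subset_right) fun x hx => (hgf x hx.1).trans (hkf x hx.2).symm
  have hglue := piecewise_eq_right_of_eq_on_inter hgk
  refine ⟨⟨A.piecewise g fun x => k x + c, continuousOn_univ.1 <| hu ▸
    (hg.congr (A.piecewise_eqOn _ _)).union_of_isClosed
      ((hk.add continuousOn_const).congr hglue) hAc hCc⟩, fun x => ?_⟩
  rcases hu.symm ▸ Set.mem_univ x with hx | hx
  · simp [hx, hgf]
  · simp [hglue x hx, Complex.exp_add, hc, hkf x hx]

end HasContinuousLog
end ContinuousLog

section ConvexCell

variable {X V : Type*} [TopologicalSpace X] [NormedAddCommGroup V] [NormedSpace ℝ V]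

/-- The set `A` is compact and the map `p` is a chart of `A` with convex image: up to
homeomorphism, `A` is a compact convex set. Keeping the chart `p` in the data lets `A` be cut into
smaller cells along hyperplanes of `V`. -/
structure IsConvexCell (p : X → V) (A : Set X) : Prop where
  isCompact : IsCompact A
  continuousOn : ContinuousOn p A
  injOn : Set.InjOn p A
  convex_image : Convex ℝ (p '' A)

namespace IsConvexCell

variable {p : X → V} {A : Set X}

theorem inter_preimage [T2Space X] (hA : IsConvexCell p A) {C : Set V} (hC : IsClosed C)
    (hCc : Convex ℝ C) : IsConvexCell p (A ∩ p ⁻¹' C) where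
  isCompact := hA.isCompact.of_isClosed_subset
    (hA.continuousOn.preimage_isClosed_of_isClosed hA.isCompact.isClosed hC) Set.inter_subset_left
  continuousOn := hA.continuousOn.mono Set.inter_subset_left
  injOn := hA.injOn.mono Set.inter_subset_left
  convex_image := by
    rw [Set.image_inter_preimage]
    exact hA.convex_image.inter hCc

theorem exists_homeomorph_image (hA : IsConvexCell p A) :
    ∃ e : A ≃ₜ p '' A, ∀ x, (e x : V) = p x := by
  have : CompactSpace A := isCompact_iff_compactSpace.1 hA.isCompact
  have hcont : Continuous (hA.injOn.bijOn_image.equiv p) :=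
    hA.continuousOn.domRestrict.subtype_mk _
  exact ⟨hcont.homeoOfEquivCompactToT2, fun _ => rfl⟩

theorem contractibleSpace (hA : IsConvexCell p A) (hne : A.Nonempty) : ContractibleSpace A := by
  obtain ⟨e, -⟩ := hA.exists_homeomorph_image
  have := hA.convex_image.contractibleSpace (hne.image p)
  exact e.contractibleSpace

theorem isPreconnected (hA : IsConvexCell p A) : IsPreconnected A := by
  rcases A.eq_empty_or_nonempty with rfl | hne
  · exact isPreconnected_empty
  · have := hA.contractibleSpace hne
    exact isPreconnected_iff_preconnectedSpace.2 inferInstance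

theorem hasContinuousLog (hA : IsConvexCell p A) : HasContinuousLog A := by
  rcases A.eq_empty_or_nonempty with rfl | hne
  · exact fun _ _ => ⟨0, by simp⟩
  · have := hA.contractibleSpace hne
    exact .of_contractibleSpace

theorem comp_homeomorph {Y : Type*} [TopologicalSpace Y] (hA : IsConvexCell p A) (h : Y ≃ₜ X) :
    IsConvexCell (p ∘ h) (h ⁻¹' A) where
  isCompact := h.isCompact_preimage.2 hA.isCompact
  continuousOn := hA.continuousOn.comp h.continuous.continuousOn fun _ hx => hx
  injOn := hA.injOn.comp h.injective.injOn fun _ hx => hx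
  convex_image := by
    rw [Set.image_comp, h.image_preimage]
    exact hA.convex_image

end IsConvexCell

theorem forall_of_interval_bisection {P : ℝ → ℝ → Prop} {δ : ℝ} (hδ : 0 < δ)
    (small : ∀ s t, t - s < δ → P s t)
    (trans : ∀ s m t, s ≤ m → m ≤ t → P s m → P m t → P s t) (s t : ℝ) : P s t := by
  have bisect (k : ℕ) : ∀ s t, t - s < 2 ^ k * δ → P s t := by
    induction k with
    | zero => simpa using small
    | succ k ih =>
      intro s t hst
      rw [pow_succ] at hst
      rcases lt_or_ge t s with hts | hts
      · exact small s t (by linarith)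
      · exact trans s ((s + t) / 2) t (by linarith) (by linarith) (ih _ _ (by linarith))
          (ih _ _ (by linarith))
  obtain ⟨k, hk⟩ := pow_unbounded_of_one_lt ((t - s) / δ) one_lt_two
  exact bisect k s t ((div_lt_iff₀ hδ).1 hk)

namespace IsConvexCell

variable {p : X → V} {A : Set X} {R : Set X → Prop}

theorem exists_pos_forall_dist_lt (hA : IsConvexCell p A) (mono : ∀ ⦃K L⦄, K ⊆ L → R L → R K)
    (nhds : ∀ x ∈ A, ∃ U ∈ nhds x, R U) :
    ∃ ε > 0, ∀ x ∈ A, R {y ∈ A | dist (p y) (p x) < ε} := by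
  obtain ⟨e, he⟩ := hA.exists_homeomorph_image
  have : CompactSpace (p '' A) :=
    isCompact_iff_compactSpace.1 (hA.isCompact.image_of_continuousOn hA.continuousOn)
  choose U hU hRU using fun x : A => nhds x x.2
  obtain ⟨ε, hε, hball⟩ := lebesgue_number_lemma_of_metric isCompact_univ
    (c := fun x => (Subtype.val ∘ e.symm) ⁻¹' interior (U x))
    (fun x => isOpen_interior.preimage (by fun_prop))
    fun z _ => Set.mem_iUnion.2 ⟨e.symm z, mem_interior_iff_mem_nhds.2 (hU _)⟩
  refine ⟨ε, hε, fun x hx => ?_⟩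
  obtain ⟨x', hx'⟩ := hball (e ⟨x, hx⟩) trivial
  refine mono (fun y hy => ?_) (hRU x')
  have hy' := hx' (show e ⟨y, hy.1⟩ ∈ _ by simpa [Subtype.dist_eq, he] using hy.2)
  simpa using interior_subset hy'

variable [T2Space X]

theorem induction_on_slabs (hA : IsConvexCell p A) (mono : ∀ ⦃K L⦄, K ⊆ L → R L → R K)
    (union : ∀ ⦃K L⦄, IsConvexCell p K → IsConvexCell p L → IsConvexCell p (K ∩ L) →
      R K → R L → R (K ∪ L))
    (ℓ : V →L[ℝ] ℝ) {δ : ℝ} (hδ : 0 < δ)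
    (slab : ∀ s t, t - s < δ → R (A ∩ p ⁻¹' (ℓ ⁻¹' Set.Icc s t))) : R A := by
  have cell {C : Set ℝ} (hC : IsClosed C) (hCc : Convex ℝ C) :
      IsConvexCell p (A ∩ p ⁻¹' (ℓ ⁻¹' C)) :=
    hA.inter_preimage (hC.preimage ℓ.continuous) (hCc.linear_preimage (ℓ : V →ₗ[ℝ] ℝ))
  have cell_Icc (s t : ℝ) := cell (isClosed_Icc (a := s) (b := t)) (convex_Icc s t)
  have hR : ∀ s t, R (A ∩ p ⁻¹' (ℓ ⁻¹' Set.Icc s t)) := by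
    refine forall_of_interval_bisection hδ slab fun s m t hsm hmt hl hr => ?_
    rw [← Set.Icc_union_Icc_eq_Icc hsm hmt, Set.preimage_union, Set.preimage_union,
      Set.inter_union_distrib_left]
    refine union (cell_Icc s m) (cell_Icc m t) ?_ hl hr
    rw [← Set.inter_inter_distrib_left, ← Set.preimage_inter, ← Set.preimage_inter]
    exact cell (isClosed_Icc.inter isClosed_Icc) ((convex_Icc s m).inter (convex_Icc m t))
  have hcomp : IsCompact ((ℓ ∘ p) '' A) :=
    hA.isCompact.image_of_continuousOn (ℓ.continuous.comp_continuousOn hA.continuousOn)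
  obtain ⟨s, t, hst⟩ := bddBelow_bddAbove_iff_subset_Icc.1 ⟨hcomp.bddBelow, hcomp.bddAbove⟩
  exact mono (Set.subset_inter subset_rfl fun x hx => hst ⟨x, hx, rfl⟩) (hR s t)

theorem induction_on_finset_slabs {ι : Type*} (hA : IsConvexCell p A)
    (mono : ∀ ⦃K L⦄, K ⊆ L → R L → R K)
    (union : ∀ ⦃K L⦄, IsConvexCell p K → IsConvexCell p L → IsConvexCell p (K ∩ L) →
      R K → R L → R (K ∪ L))
    (ℓ : ι → V →L[ℝ] ℝ) {δ : ℝ} (hδ : 0 < δ) (T : Finset ι)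
    (small : ∀ K ⊆ A, (∀ i ∈ T, ∀ x ∈ K, ∀ y ∈ K, dist (ℓ i (p x)) (ℓ i (p y)) < δ) → R K) :
    R A := by
  classical
  induction T using Finset.induction_on generalizing A with
  | empty => exact small A subset_rfl (by simp)
  | insert i T _ ih =>
    refine hA.induction_on_slabs mono union (ℓ i) hδ fun s t hst => ih (hA.inter_preimage
      (isClosed_Icc.preimage (ℓ i).continuous)
      ((convex_Icc s t).linear_preimage (ℓ i : V →ₗ[ℝ] ℝ))) fun K hK hKT => ?_
    refine small K (hK.trans Set.inter_subset_left) fun j hj x hx y hy => ?_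
    rcases Finset.mem_insert.1 hj with rfl | hj
    · exact (Real.dist_le_of_mem_Icc (hK hx).2 (hK hy).2).trans_lt hst
    · exact hKT j hj x hx y hy

protected theorem induction_on [FiniteDimensional ℝ V] (hA : IsConvexCell p A) (empty : R ∅)
    (mono : ∀ ⦃K L⦄, K ⊆ L → R L → R K) (nhds : ∀ x ∈ A, ∃ U ∈ nhds x, R U)
    (union : ∀ ⦃K L⦄, IsConvexCell p K → IsConvexCell p L → IsConvexCell p (K ∩ L) →
      R K → R L → R (K ∪ L)) : R A := by
  obtain ⟨ε, hε, hball⟩ := hA.exists_pos_forall_dist_lt mono nhds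
  let b := Module.finBasis ℝ V
  obtain ⟨δ, hδ, hb⟩ :=
    Metric.uniformContinuous_iff.1 b.equivFunL.symm.lipschitz.uniformContinuous ε hε
  refine hA.induction_on_finset_slabs mono union
    (fun i => (b.coord i).toContinuousLinearMap) hδ Finset.univ
    fun K hKA hK => ?_
  rcases K.eq_empty_or_nonempty with rfl | ⟨x, hx⟩
  · exact empty
  have hsub : K ⊆ {y ∈ A | dist (p y) (p x) < ε} := fun y hy => ⟨hKA hy, by
    have hyx : dist (b.equivFunL (p y)) (b.equivFunL (p x)) < δ :=
      (dist_pi_lt_iff hδ).2 fun i => hK i (Finset.mem_univ i) y hy x hx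
    simpa using hb hyx⟩
  exact mono hsub (hball x (hKA hx))

end IsConvexCell

end ConvexCell

section Sphere

variable {W : Type*} [NormedAddCommGroup W] [InnerProductSpace ℝ W]

/-- The closed hemisphere, centred at the unit vector `v`, of the unit sphere. -/
def closedHemisphere (v : W) : Set (Metric.sphere (0 : W) 1) := {x | 0 ≤ inner ℝ v (x : W)}

/-- The equator of the unit sphere with respect to the pole `v`. -/
def equator (v : W) : Set (Metric.sphere (0 : W) 1) := {x | inner ℝ v (x : W) = 0}

/-- The equator orthogonal to `v` is the unit sphere of the hyperplane `vᗮ`. -/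
def equatorHomeomorph (v : W) : equator v ≃ₜ Metric.sphere (0 : (ℝ ∙ v)ᗮ) 1 where
  toFun x := ⟨⟨x, Submodule.mem_orthogonal_singleton_iff_inner_right.2 x.2⟩, by simp⟩
  invFun y := ⟨⟨y, mem_sphere_zero_iff_norm.2 (norm_eq_of_mem_sphere y)⟩,
    Submodule.mem_orthogonal_singleton_iff_inner_right.1 y.1.2⟩
  left_inv _ := rfl
  right_inv _ := rfl
  continuous_toFun := by fun_prop
  continuous_invFun := by fun_prop

theorem isClosed_closedHemisphere (v : W) : IsClosed (closedHemisphere v) :=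
  isClosed_le continuous_const (by fun_prop)

theorem closedHemisphere_union_neg (v : W) :
    closedHemisphere v ∪ closedHemisphere (-v) = Set.univ := by
  refine Set.eq_univ_of_forall fun x => ?_
  simpa [closedHemisphere] using le_total 0 (inner ℝ v (x : W))

theorem closedHemisphere_inter_neg (v : W) :
    closedHemisphere v ∩ closedHemisphere (-v) = equator v := by
  ext x
  simp only [closedHemisphere, equator, inner_neg_left, Set.mem_inter_iff, Set.mem_ofPred_eq,
    Left.nonneg_neg_iff, le_antisymm_iff, and_comm]

theorem inner_smul_add_orthogonalProjectionOnto {v : W} (hv : ‖v‖ = 1) (x : W) :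
    inner ℝ v x • v + (ℝ ∙ v)ᗮ.orthogonalProjectionOnto x = x := by
  rw [← Submodule.starProjection_unit_singleton ℝ hv]
  exact (ℝ ∙ v).starProjection_add_starProjection_orthogonal x

theorem norm_smul_add_sq {v : W} (hv : ‖v‖ = 1) (t : ℝ) (y : (ℝ ∙ v)ᗮ) :
    ‖t • v + y‖ ^ 2 = t ^ 2 + ‖y‖ ^ 2 := by
  rw [norm_add_sq_real, inner_smul_left, Submodule.mem_orthogonal_singleton_iff_inner_right.1 y.2,
    norm_smul, hv]
  simp

theorem inner_eq_sqrt_of_mem_closedHemisphere {v : W} (hv : ‖v‖ = 1) {x : Metric.sphere (0 : W) 1}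
    (hx : x ∈ closedHemisphere v) :
    inner ℝ v (x : W) = √(1 - ‖(ℝ ∙ v)ᗮ.orthogonalProjectionOnto (x : W)‖ ^ 2) := by
  have h := norm_smul_add_sq hv (inner ℝ v (x : W)) ((ℝ ∙ v)ᗮ.orthogonalProjectionOnto (x : W))
  rw [inner_smul_add_orthogonalProjectionOnto hv, norm_eq_of_mem_sphere, one_pow] at h
  rw [eq_comm, Real.sqrt_eq_iff_eq_sq (by linarith [sq_nonneg (inner ℝ v (x : W))]) hx]
  linarith

theorem image_orthogonalProjectionOnto_closedHemisphere {v : W} (hv : ‖v‖ = 1) :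
    (fun x : Metric.sphere (0 : W) 1 => (ℝ ∙ v)ᗮ.orthogonalProjectionOnto (x : W)) ''
      closedHemisphere v = Metric.closedBall 0 1 := by
  ext y
  rw [mem_closedBall_zero_iff]
  constructor
  · rintro ⟨x, -, rfl⟩
    exact ((ℝ ∙ v)ᗮ.norm_orthogonalProjectionOnto_apply_le (x : W)).trans_eq (by simp)
  · intro hy
    have hsq : 0 ≤ 1 - ‖y‖ ^ 2 := sub_nonneg.2 (pow_le_one₀ (norm_nonneg y) hy)
    have hmem : √(1 - ‖y‖ ^ 2) • v + (y : W) ∈ Metric.sphere (0 : W) 1 := by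
      rw [mem_sphere_zero_iff_norm, ← pow_eq_one_iff_of_nonneg (norm_nonneg _) two_ne_zero,
        norm_smul_add_sq hv, Real.sq_sqrt hsq, sub_add_cancel]
    have hinner : inner ℝ v (y : W) = 0 := Submodule.mem_orthogonal_singleton_iff_inner_right.1 y.2
    refine ⟨⟨_, hmem⟩, ?_, ?_⟩
    · simp [closedHemisphere, inner_add_right, inner_smul_right, hinner, hv]
    · simp [Submodule.orthogonalProjectionOnto_orthogonalComplement_singleton_eq_zero]

theorem isConvexCell_closedHemisphere [FiniteDimensional ℝ W] {v : W} (hv : ‖v‖ = 1) :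
    IsConvexCell (fun x : Metric.sphere (0 : W) 1 => (ℝ ∙ v)ᗮ.orthogonalProjectionOnto (x : W))
      (closedHemisphere v) where
  isCompact := (isClosed_closedHemisphere v).isCompact
  continuousOn := by fun_prop
  injOn := fun x hx y hy hxy => by
    dsimp only at hxy
    rw [Subtype.ext_iff, ← inner_smul_add_orthogonalProjectionOnto hv (x : W),
      ← inner_smul_add_orthogonalProjectionOnto hv (y : W),
      inner_eq_sqrt_of_mem_closedHemisphere hv hx, inner_eq_sqrt_of_mem_closedHemisphere hv hy, hxy]
  convex_image := by
    rw [image_orthogonalProjectionOnto_closedHemisphere hv]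
    exact convex_closedBall 0 1

theorem finrank_orthogonal_span_singleton_add_one [FiniteDimensional ℝ W] {v : W} (hv : ‖v‖ = 1) :
    Module.finrank ℝ (ℝ ∙ v)ᗮ + 1 = Module.finrank ℝ W := by
  rw [← (ℝ ∙ v).finrank_add_finrank_orthogonal,
    finrank_span_singleton (norm_ne_zero_iff.1 (hv.trans_ne one_ne_zero)), add_comm]

theorem isPreconnected_equator {v : W} (hv : ‖v‖ = 1) (hW : 3 ≤ Module.finrank ℝ W) :
    IsPreconnected (equator v) := by
  have : FiniteDimensional ℝ W := .of_finrank_pos (by lia)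
  have hrank : 1 < Module.rank ℝ (ℝ ∙ v)ᗮ := by
    rw [← Module.finrank_eq_rank]
    have := finrank_orthogonal_span_singleton_add_one hv
    exact_mod_cast (by lia : 1 < Module.finrank ℝ (ℝ ∙ v)ᗮ)
  have := isPreconnected_iff_preconnectedSpace.1 (isPreconnected_sphere hrank 0 1)
  rw [isPreconnected_iff_preconnectedSpace]
  exact (equatorHomeomorph v).symm.surjective.denseRange.preconnectedSpace (by fun_prop)

theorem hasContinuousLog_sphere (hW : 3 ≤ Module.finrank ℝ W) :
    HasContinuousLog (Metric.sphere (0 : W) 1) := by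
  have : FiniteDimensional ℝ W := .of_finrank_pos (by lia)
  have : Nontrivial W := Module.nontrivial_of_finrank_pos (R := ℝ) (by lia)
  obtain ⟨v, hv⟩ := exists_norm_eq W zero_le_one
  have hv' : ‖-v‖ = 1 := by rw [norm_neg, hv]
  exact .of_isClosed_union (isConvexCell_closedHemisphere hv).hasContinuousLog
    (isConvexCell_closedHemisphere hv').hasContinuousLog (isClosed_closedHemisphere v)
    (isClosed_closedHemisphere (-v)) (closedHemisphere_inter_neg v ▸ isPreconnected_equator hv hW)
    (closedHemisphere_union_neg v)

theorem hasContinuousLog_equator {v : W} (hv : ‖v‖ = 1) (hW : 4 ≤ Module.finrank ℝ W) :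
    HasContinuousLog (equator v) := by
  have : FiniteDimensional ℝ W := .of_finrank_pos (by lia)
  have := finrank_orthogonal_span_singleton_add_one hv
  exact (hasContinuousLog_sphere (by lia)).of_homeomorph (equatorHomeomorph v).symm

end Sphere

section Extension

theorem exists_continuous_eqOn_of_continuousOn.{u, v} {X : Type u} {Y : Type v} [TopologicalSpace X]
    [NormalSpace X] [TopologicalSpace Y] [TietzeExtension.{u, v} Y] {K : Set X} (hK : IsClosed K)
    {f : X → Y} (hf : ContinuousOn f K) : ∃ g : X → Y, Continuous g ∧ Set.EqOn g f K := by
  obtain ⟨g, hg⟩ := ContinuousMap.exists_restrict_eq hK ⟨K.domRestrict f, hf.domRestrict⟩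
  exact ⟨g, g.continuous, fun x hx => congrArg (· ⟨x, hx⟩) hg⟩

variable {X : Type*} [TopologicalSpace X] {K : Set X}

/-- Every continuous map from `K` to `GL n ℝ` extends continuously to the whole space. -/
def HasGLExtension (n : ℕ) (K : Set X) : Prop :=
  ∀ M : X → Matrix (Fin n) (Fin n) ℝ, ContinuousOn M K → (∀ x ∈ K, IsUnit (M x)) →
    ∃ N : X → Matrix (Fin n) (Fin n) ℝ, Continuous N ∧ (∀ x, IsUnit (N x)) ∧ Set.EqOn N M K

variable [NormalSpace X]

theorem exists_continuous_ne_zero_eqOn_of_isPreconnected (hK : IsClosed K) (hKc : IsPreconnected K)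
    {f : X → ℝ} (hf : ContinuousOn f K) (hf₀ : ∀ x ∈ K, f x ≠ 0) :
    ∃ g : X → ℝ, Continuous g ∧ (∀ x, g x ≠ 0) ∧ Set.EqOn g f K := by
  rcases K.eq_empty_or_nonempty with rfl | ⟨x₀, hx₀⟩
  · exact ⟨1, continuous_const, by simp, Set.eqOn_empty _ _⟩
  have hdiv : ContinuousOn (fun x => f x / f x₀) K := hf.div_const _
  have hpos (x) (hx : x ∈ K) : 0 < f x / f x₀ := by
    by_contra! hle
    obtain ⟨y, hy, hy₀⟩ := hKc.intermediate_value hx hx₀ hdiv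
      (show (0 : ℝ) ∈ Set.Icc _ _ from ⟨hle, by simp [hf₀ x₀ hx₀]⟩)
    exact div_ne_zero (hf₀ y hy) (hf₀ x₀ hx₀) hy₀
  obtain ⟨l, hl, hlf⟩ := exists_continuous_eqOn_of_continuousOn hK
    (hdiv.log fun x hx => (hpos x hx).ne')
  refine ⟨fun x => f x₀ * Real.exp (l x), by fun_prop,
    fun x => mul_ne_zero (hf₀ x₀ hx₀) (Real.exp_ne_zero _), fun x hx => ?_⟩
  simp only [hlf hx, Real.exp_log (hpos x hx), mul_div_cancel₀ _ (hf₀ x₀ hx₀)]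

theorem HasContinuousLog.exists_continuous_ne_zero_eqOn (hlog : HasContinuousLog K)
    (hK : IsClosed K) {f : X → ℂ} (hf : ContinuousOn f K) (hf₀ : ∀ x ∈ K, f x ≠ 0) :
    ∃ g : X → ℂ, Continuous g ∧ (∀ x, g x ≠ 0) ∧ Set.EqOn g f K := by
  obtain ⟨l, hl, hlf⟩ := hlog.exists_continuousOn hf hf₀
  obtain ⟨l', hl', hll'⟩ := exists_continuous_eqOn_of_continuousOn hK hl
  exact ⟨fun x => Complex.exp (l' x), by fun_prop, fun x => Complex.exp_ne_zero _,
    fun x hx => (congrArg Complex.exp (hll' hx)).trans (hlf x hx)⟩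

theorem isUnit_matrix_re_im_iff (z w : ℂ) :
    IsUnit !![z.re, z.im; w.re, w.im] ↔ z ≠ 0 ∧ (w / z).im ≠ 0 := by
  rw [Matrix.isUnit_iff_isUnit_det, Matrix.det_fin_two_of, isUnit_iff_ne_zero, Complex.div_im]
  by_cases hz : z = 0
  · simp [hz]
  have hn : Complex.normSq z ≠ 0 := by simpa using hz
  rw [← sub_div, div_ne_zero_iff]
  simp only [ne_eq, hz, not_false_eq_true, hn, and_true, true_and]
  ring_nf

theorem hasGLExtension_two (hK : IsClosed K) (hKc : IsPreconnected K) (hlog : HasContinuousLog K) :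
    HasGLExtension 2 K := by
  intro M hM hunit
  have hentry (i j : Fin 2) : ContinuousOn (fun x => M x i j) K :=
    (continuous_id.matrix_elem i j).comp_continuousOn hM
  -- Reading the rows as complex numbers `z` and `w` identifies an invertible matrix with the
  -- independent data `z ≠ 0`, `(w / z).re` and `(w / z).im ≠ 0`, each of which extends.
  let p (i : Fin 2) (x : X) : ℂ := ⟨M x i 0, M x i 1⟩
  have hp (i : Fin 2) : ContinuousOn (p i) K :=
    Complex.equivRealProdCLM.symm.continuous.comp_continuousOn ((hentry i 0).prodMk (hentry i 1))
  have hMp (x) : M x = !![(p 0 x).re, (p 0 x).im; (p 1 x).re, (p 1 x).im] := M x |>.eta_fin_two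
  have hp₀ (x) (hx : x ∈ K) : p 0 x ≠ 0 ∧ (p 1 x / p 0 x).im ≠ 0 :=
    (isUnit_matrix_re_im_iff _ _).1 (hMp x ▸ hunit x hx)
  have hw : ContinuousOn (fun x => p 1 x / p 0 x) K := (hp 1).div (hp 0) fun x hx => (hp₀ x hx).1
  obtain ⟨P, hP, hP₀, hPp⟩ := hlog.exists_continuous_ne_zero_eqOn hK (hp 0) fun x hx => (hp₀ x hx).1
  obtain ⟨a, ha, haw⟩ := exists_continuous_eqOn_of_continuousOn hK
    (Complex.continuous_re.comp_continuousOn hw)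
  obtain ⟨b, hb, hb₀, hbw⟩ := exists_continuous_ne_zero_eqOn_of_isPreconnected hK hKc
    (Complex.continuous_im.comp_continuousOn hw) fun x hx => (hp₀ x hx).2
  let Q (x : X) : ℂ := P x * (a x + b x * Complex.I)
  have hQ : Continuous Q := by fun_prop
  refine ⟨fun x => !![(P x).re, (P x).im; (Q x).re, (Q x).im], ?_, fun x => ?_, fun x hx => ?_⟩
  · exact continuous_matrix <| Fin.forall_fin_two.2
      ⟨Fin.forall_fin_two.2 ⟨Complex.continuous_re.comp hP, Complex.continuous_im.comp hP⟩,
        Fin.forall_fin_two.2 ⟨Complex.continuous_re.comp hQ, Complex.continuous_im.comp hQ⟩⟩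
  · rw [isUnit_matrix_re_im_iff, mul_div_cancel_left₀ _ (hP₀ x)]
    exact ⟨hP₀ x, by simpa using hb₀ x⟩
  · have hQp : Q x = p 1 x := by
      simp only [Q, haw hx, hbw hx, Function.comp_apply, Complex.re_add_im, hPp hx]
      exact mul_div_cancel₀ _ (hp₀ x hx).1
    simp only [hMp x, hQp, hPp hx]

theorem det_eq_det_submatrix_succ_of_row_zero {R : Type*} [CommRing R] {n : ℕ}
    {M : Matrix (Fin (n + 1)) (Fin (n + 1)) R} (hM : M 0 = Pi.single 0 1) :
    M.det = (M.submatrix Fin.succ Fin.succ).det := by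
  rw [Matrix.det_succ_row_zero, Fin.sum_univ_succ]
  simp [hM]

theorem HasGLExtension.exists_extension_of_row_zero {n : ℕ} (h : HasGLExtension n K)
    (hK : IsClosed K) {M : X → Matrix (Fin (n + 1)) (Fin (n + 1)) ℝ} (hM : ContinuousOn M K)
    (hunit : ∀ x ∈ K, IsUnit (M x)) (hrow : ∀ x ∈ K, M x 0 = Pi.single 0 1) :
    ∃ N : X → Matrix (Fin (n + 1)) (Fin (n + 1)) ℝ, Continuous N ∧ (∀ x, IsUnit (N x)) ∧
      (∀ x, N x 0 = Pi.single 0 1) ∧ Set.EqOn N M K := by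
  simp only [Matrix.isUnit_iff_isUnit_det] at hunit ⊢
  have hminor : ContinuousOn (fun x => (M x).submatrix Fin.succ Fin.succ) K :=
    (continuous_id.matrix_submatrix Fin.succ Fin.succ).comp_continuousOn hM
  have hcol : ContinuousOn (fun x (i : Fin n) => M x i.succ 0) K :=
    continuousOn_pi.2 fun i => (continuous_id.matrix_elem i.succ 0).comp_continuousOn hM
  obtain ⟨S, hS, hSunit, hSM⟩ := h _ hminor fun x hx => (Matrix.isUnit_iff_isUnit_det _).2
    (det_eq_det_submatrix_succ_of_row_zero (hrow x hx) ▸ hunit x hx)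
  obtain ⟨a, ha, haM⟩ := exists_continuous_eqOn_of_continuousOn hK hcol
  let N (x : X) : Matrix (Fin (n + 1)) (Fin (n + 1)) ℝ :=
    Matrix.of (Fin.cons (Pi.single 0 1) fun i => Fin.cons (a x i) (S x i))
  refine ⟨N, ?_, fun x => ?_, fun x => rfl, fun x hx => ?_⟩
  · exact continuous_matrix <| Fin.cases (fun _ => continuous_const) fun i =>
      Fin.cases ((continuous_apply i).comp ha) fun j => hS.matrix_elem i j
  · rw [det_eq_det_submatrix_succ_of_row_zero rfl]
    exact (Matrix.isUnit_iff_isUnit_det _).1 (hSunit x)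
  · ext i j
    cases i using Fin.cases with
    | zero => simp [N, hrow x hx]
    | succ i =>
      cases j using Fin.cases with
      | zero => exact congrFun (haM hx) i
      | succ j => exact congrFun (congrFun (hSM hx) i) j

end Extension

section Frame

open Filter Topology

theorem tendsto_of_tendsto_sum_smul {𝕜 F ι Y : Type*} [NontriviallyNormedField 𝕜]
    [CompleteSpace 𝕜] [NormedAddCommGroup F] [NormedSpace 𝕜 F] [FiniteDimensional 𝕜 F] [Fintype ι]
    {l : Filter Y} {v : Y → ι → F} {v₀ : ι → F} (hv : Tendsto v l (𝓝 v₀))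
    (hv₀ : LinearIndependent 𝕜 v₀) {c : Y → ι → 𝕜} {c₀ : ι → 𝕜}
    (h : Tendsto (fun y => ∑ i, c y i • v y i) l (𝓝 (∑ i, c₀ i • v₀ i))) :
    Tendsto c l (𝓝 c₀) := by
  -- Composed with a left inverse of the limit map `a ↦ ∑ i, a i • v₀ i`, the maps
  -- `a ↦ ∑ i, a i • v y i` become endomorphisms near the identity, where inversion is continuous.
  let A (w : ι → F) : (ι → 𝕜) →L[𝕜] F := ∑ i, (ContinuousLinearMap.proj i).smulRight (w i)
  have hA (w : ι → F) (a : ι → 𝕜) : A w a = ∑ i, a i • w i := by simp [A]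
  have hAcont : Continuous A := continuous_finsetSum _ fun i _ =>
    (ContinuousLinearMap.smulRightL 𝕜 (ι → 𝕜) F (ContinuousLinearMap.proj i)).continuous.comp
      (continuous_apply i)
  have hA₀ : (A v₀).HasLeftInverse := .of_injective_of_finiteDimensional fun a b hab =>
    hv₀.fintypeLinearCombination_injective <| by
      simpa only [Fintype.linearCombination_apply, hA] using hab
  let T (w : ι → F) : (ι → 𝕜) →L[𝕜] (ι → 𝕜) := hA₀.leftInverse ∘L A w
  have hT : Continuous T := by fun_prop
  have hT₀ : T v₀ = 1 := ContinuousLinearMap.ext hA₀.leftInverse_leftInverse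
  have hT₀unit : IsUnit (T v₀) := hT₀ ▸ isUnit_one
  have hinv : ContinuousAt (fun w => Ring.inverse (T w)) v₀ :=
    ContinuousAt.comp (g := Ring.inverse) (NormedRing.inverse_continuousAt hT₀unit.unit)
      hT.continuousAt
  let Φ (q : (ι → F) × F) : ι → 𝕜 := Ring.inverse (T q.1) (hA₀.leftInverse q.2)
  have hΦ : ContinuousAt Φ (v₀, ∑ i, c₀ i • v₀ i) :=
    ContinuousAt.clm_apply (hinv.comp_of_eq continuousAt_fst rfl)
      (hA₀.leftInverse.continuous.comp continuous_snd).continuousAt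
  have hΦ_eq {w : ι → F} (hw : IsUnit (T w)) (a : ι → 𝕜) : Φ (w, ∑ i, a i • w i) = a := by
    rw [← hA]
    exact congrArg (· a) (Ring.inverse_mul_cancel _ hw)
  have hunit : ∀ᶠ y in l, IsUnit (T (v y)) :=
    ((hT.tendsto v₀).comp hv) (Units.nhds hT₀unit.unit)
  rw [← hΦ_eq hT₀unit c₀]
  exact (hΦ.tendsto.comp (hv.prodMk_nhds h)).congr' (hunit.mono fun y hy => hΦ_eq hy (c y))

theorem linearIndependent_sum_smul_iff {𝕜 V ι : Type*} [Field 𝕜] [AddCommGroup V] [Module 𝕜 V]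
    [Fintype ι] [DecidableEq ι] {v : ι → V} (hv : LinearIndependent 𝕜 v) {M : Matrix ι ι 𝕜} :
    LinearIndependent 𝕜 (fun i => ∑ j, M i j • v j) ↔ IsUnit M := by
  rw [← Matrix.linearIndependent_rows_iff_isUnit]
  exact (Fintype.linearCombination 𝕜 v).linearIndependent_iff
    (LinearMap.ker_eq_bot.2 hv.fintypeLinearCombination_injective)

variable {𝕜 B F ι : Type*} {E : B → Type*} [NontriviallyNormedField 𝕜] [TopologicalSpace B]
  [∀ x, AddCommGroup (E x)] [∀ x, Module 𝕜 (E x)] [TopologicalSpace (TotalSpace F E)]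

variable (𝕜 F) in
/-- The sections `f i` of `E` are continuous on `K` and linearly independent at each point of `K`.
Spanning is not part of the definition: it follows when there are as many sections as the rank. -/
structure IsContinuousFrameOn (f : ι → ∀ x, E x) (K : Set B) : Prop where
  continuousOn (i : ι) : ContinuousOn (fun x => (⟨x, f i x⟩ : TotalSpace F E)) K
  linearIndependent (x : B) (hx : x ∈ K) : LinearIndependent 𝕜 (f · x)

theorem IsContinuousFrameOn.mono {f : ι → ∀ x, E x} {K L : Set B} (hKL : K ⊆ L)
    (hf : IsContinuousFrameOn 𝕜 F f L) : IsContinuousFrameOn 𝕜 F f K :=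
  ⟨fun i => (hf.continuousOn i).mono hKL, fun x hx => hf.linearIndependent x (hKL hx)⟩

theorem IsContinuousFrameOn.union {f : ι → ∀ x, E x} {A C : Set B}
    (hfA : IsContinuousFrameOn 𝕜 F f A) (hfC : IsContinuousFrameOn 𝕜 F f C) (hA : IsClosed A)
    (hC : IsClosed C) : IsContinuousFrameOn 𝕜 F f (A ∪ C) :=
  ⟨fun i => (hfA.continuousOn i).union_of_isClosed (hfC.continuousOn i) hA hC, fun x hx =>
    hx.elim (hfA.linearIndependent x) (hfC.linearIndependent x)⟩

theorem IsContinuousFrameOn.congr {f g : ι → ∀ x, E x} {K : Set B}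
    (hf : IsContinuousFrameOn 𝕜 F f K) (h : ∀ i, ∀ x ∈ K, g i x = f i x) :
    IsContinuousFrameOn 𝕜 F g K where
  continuousOn i := (hf.continuousOn i).congr fun x hx => congrArg (TotalSpace.mk x) (h i x hx)
  linearIndependent x hx := by
    simpa only [h _ x hx] using hf.linearIndependent x hx

variable [NormedAddCommGroup F] [NormedSpace 𝕜 F]

theorem linearIndependent_trivialization_iff
    (e : Trivialization F (TotalSpace.proj : TotalSpace F E → B)) [e.IsLinear 𝕜] {x : B}
    (hx : x ∈ e.baseSet) {v : ι → E x} :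
    LinearIndependent 𝕜 (fun i => (e ⟨x, v i⟩).2) ↔ LinearIndependent 𝕜 v :=
  (e.linearEquivAt 𝕜 x hx).toLinearMap.linearIndependent_iff (LinearEquiv.ker _)

variable [Fintype ι]

theorem trivialization_sum_smul (e : Trivialization F (TotalSpace.proj : TotalSpace F E → B))
    [e.IsLinear 𝕜] {x : B} (hx : x ∈ e.baseSet) (c : ι → 𝕜) (v : ι → E x) :
    (e ⟨x, ∑ i, c i • v i⟩).2 = ∑ i, c i • (e ⟨x, v i⟩).2 := by
  change e.linearEquivAt 𝕜 x hx (∑ i, c i • v i) = ∑ i, c i • e.linearEquivAt 𝕜 x hx (v i)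
  simp only [map_sum, map_smul]

variable [∀ x, TopologicalSpace (E x)] [FiberBundle F E] [VectorBundle 𝕜 F E]

variable {Y : Type*} [TopologicalSpace Y] {q : Y → B} {S : Set Y}

theorem continuousOn_totalSpace_sum_smul {σ : ι → ∀ y, E (q y)} {c : Y → ι → 𝕜}
    (hq : ContinuousOn q S)
    (hσ : ∀ i, ContinuousOn (fun y => (⟨q y, σ i y⟩ : TotalSpace F E)) S)
    (hc : ContinuousOn c S) :
    ContinuousOn (fun y => (⟨q y, ∑ i, c y i • σ i y⟩ : TotalSpace F E)) S := by
  intro y₀ hy₀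
  let e := trivializationAt F E (q y₀)
  have he₀ : q y₀ ∈ e.baseSet := FiberBundle.mem_baseSet_trivializationAt _ _ _
  have he : ∀ᶠ y in 𝓝[S] y₀, q y ∈ e.baseSet := hq y₀ hy₀ (e.open_baseSet.mem_nhds he₀)
  refine (FiberBundle.continuousWithinAt_totalSpace _ _).2 ⟨hq y₀ hy₀, ?_⟩
  refine ContinuousWithinAt.congr_of_eventuallyEq (f := fun y => ∑ i, c y i • (e ⟨q y, σ i y⟩).2)
    (tendsto_finsetSum _ fun i _ => ?_) (he.mono fun y hy => trivialization_sum_smul e hy _ _)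
    (trivialization_sum_smul e he₀ _ _)
  exact ((continuous_apply i).continuousAt.comp_continuousWithinAt (hc y₀ hy₀)).smul
    ((FiberBundle.continuousWithinAt_totalSpace _ _).1 (hσ i y₀ hy₀)).2

theorem exists_mem_nhds_isContinuousFrameOn {κ : Type*} [Finite κ] [CompleteSpace 𝕜]
    {f : κ → ∀ x, E x} {x₀ : B} {U : Set B} (hU : U ∈ 𝓝 x₀)
    (hf : ∀ i, ContinuousOn (fun x => (⟨x, f i x⟩ : TotalSpace F E)) U)
    (hf₀ : LinearIndependent 𝕜 (f · x₀)) : ∃ K ∈ 𝓝 x₀, IsContinuousFrameOn 𝕜 F f K := by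
  let e := trivializationAt F E x₀
  have hx₀ : x₀ ∈ e.baseSet := FiberBundle.mem_baseSet_trivializationAt _ _ _
  have hcont : ContinuousAt (fun x i => (e ⟨x, f i x⟩).2) x₀ := continuousAt_pi.2 fun i =>
    ((FiberBundle.continuousAt_totalSpace _ _).1 ((hf i).continuousAt hU)).2
  have hli : ∀ᶠ x in 𝓝 x₀, LinearIndependent 𝕜 fun i => (e ⟨x, f i x⟩).2 :=
    hcont ((linearIndependent_trivialization_iff e hx₀).2 hf₀).eventually
  refine ⟨_, Filter.inter_mem hU (Filter.inter_mem (e.open_baseSet.mem_nhds hx₀) hli),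
    fun i => (hf i).mono Set.inter_subset_left, fun x hx => ?_⟩
  exact (linearIndependent_trivialization_iff e hx.2.1).1 hx.2.2

namespace IsContinuousFrameOn

variable {f g : ι → ∀ x, E x} {K : Set B}

theorem matrix_smul [DecidableEq ι] (hf : IsContinuousFrameOn 𝕜 F f K) {M : B → Matrix ι ι 𝕜}
    (hM : ContinuousOn M K) (hunit : ∀ x ∈ K, IsUnit (M x)) :
    IsContinuousFrameOn 𝕜 F (fun i x => ∑ j, M x i j • f j x) K where
  continuousOn i := continuousOn_totalSpace_sum_smul continuousOn_id hf.continuousOn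
    ((continuous_apply i).comp_continuousOn hM)
  linearIndependent x hx :=
    (linearIndependent_sum_smul_iff (hf.linearIndependent x hx)).2 (hunit x hx)

variable [FiniteDimensional 𝕜 F]

theorem span_eq_top (hf : IsContinuousFrameOn 𝕜 F f K)
    (hcard : Fintype.card ι = Module.finrank 𝕜 F) {x : B} (hx : x ∈ K) :
    Submodule.span 𝕜 (Set.range (f · x)) = ⊤ := by
  let L := (trivializationAt F E x).linearEquivAt 𝕜 x
    (FiberBundle.mem_baseSet_trivializationAt _ _ _)
  have : FiniteDimensional 𝕜 (E x) := L.symm.finiteDimensional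
  exact (hf.linearIndependent x hx).span_eq_top_of_card_eq_finrank' (hcard.trans L.finrank_eq.symm)

variable [CompleteSpace 𝕜]

theorem continuousOn_coeff (hf : IsContinuousFrameOn 𝕜 F f K) (hq : Set.MapsTo q S K)
    {c : Y → ι → 𝕜}
    (hc : ContinuousOn (fun y => (⟨q y, ∑ i, c y i • f i (q y)⟩ : TotalSpace F E)) S) :
    ContinuousOn c S := by
  intro y₀ hy₀
  obtain ⟨hqy₀, hcy₀⟩ := (FiberBundle.continuousWithinAt_totalSpace _ _).1 (hc y₀ hy₀)
  let e := trivializationAt F E (q y₀)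
  have he₀ : q y₀ ∈ e.baseSet := FiberBundle.mem_baseSet_trivializationAt _ _ _
  have he : ∀ᶠ y in 𝓝[S] y₀, q y ∈ e.baseSet := hqy₀ (e.open_baseSet.mem_nhds he₀)
  have hfq : Tendsto (fun y i => (e ⟨q y, f i (q y)⟩).2) (𝓝[S] y₀)
      (𝓝 fun i => (e ⟨q y₀, f i (q y₀)⟩).2) := tendsto_pi_nhds.2 fun i =>
    (((FiberBundle.continuousWithinAt_totalSpace _ _).1 (hf.continuousOn i (q y₀) (hq hy₀))).2).comp
      hqy₀ hq
  refine tendsto_of_tendsto_sum_smul hfq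
    ((linearIndependent_trivialization_iff e he₀).2 (hf.linearIndependent _ (hq hy₀))) ?_
  rw [← trivialization_sum_smul e he₀]
  exact Tendsto.congr' (he.mono fun y hy => trivialization_sum_smul e hy _ _) hcy₀

theorem exists_matrix_sum_smul_eq [DecidableEq ι] (hf : IsContinuousFrameOn 𝕜 F f K)
    (hg : IsContinuousFrameOn 𝕜 F g K) (hcard : Fintype.card ι = Module.finrank 𝕜 F) :
    ∃ M : B → Matrix ι ι 𝕜, ContinuousOn M K ∧ (∀ x ∈ K, IsUnit (M x)) ∧
      ∀ x ∈ K, ∀ i, ∑ j, M x i j • f j x = g i x := by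
  have hspan (x : B) : ∃ M : Matrix ι ι 𝕜, x ∈ K → ∀ i, ∑ j, M i j • f j x = g i x := by
    by_cases hx : x ∈ K
    · choose M hM using fun i => (Submodule.mem_span_range_iff_exists_fun 𝕜).1
        (hf.span_eq_top hcard hx ▸ Submodule.mem_top (x := g i x))
      exact ⟨M, fun _ => hM⟩
    · exact ⟨0, fun h => absurd h hx⟩
  choose M hM using hspan
  refine ⟨M, continuousOn_pi.2 fun i => hf.continuousOn_coeff (Set.mapsTo_id K) ?_, fun x hx => ?_,
    hM⟩
  · exact (hg.continuousOn i).congr fun x hx => congrArg (TotalSpace.mk x) (hM x hx i)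
  · rw [← linearIndependent_sum_smul_iff (hf.linearIndependent x hx)]
    simpa only [hM x hx] using hg.linearIndependent x hx

theorem exists_trivialization (hf : IsContinuousFrameOn 𝕜 F f Set.univ)
    (hcard : Fintype.card ι = Module.finrank 𝕜 F) :
    ∃ e : Trivialization F (TotalSpace.proj : TotalSpace F E → B),
      e.baseSet = Set.univ ∧ e.IsLinear 𝕜 := by
  let b (x : B) : Module.Basis ι 𝕜 (E x) :=
    .mk (hf.linearIndependent x trivial) (hf.span_eq_top hcard trivial).ge
  have hb (x : B) (v : E x) : ∑ i, (b x).equivFun v i • f i x = v := by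
    simpa only [b, Module.Basis.coe_mk] using (b x).sum_equivFun v
  have hb_symm (x : B) (c : ι → 𝕜) : (b x).equivFun.symm c = ∑ i, c i • f i x := by
    simp only [b, Module.Basis.equivFun_symm_apply, Module.Basis.coe_mk]
  let L : (ι → 𝕜) ≃L[𝕜] F := .ofFinrankEq (by rw [Module.finrank_fintype_fun_eq_card, hcard])
  let φ : TotalSpace F E ≃ₜ B × F :=
    { toFun p := (p.proj, L ((b p.proj).equivFun p.2))
      invFun y := ⟨y.1, (b y.1).equivFun.symm (L.symm y.2)⟩
      left_inv p := by simp only [L.symm_apply_apply, LinearEquiv.symm_apply_apply]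
      right_inv y := by simp only [LinearEquiv.apply_symm_apply, L.apply_symm_apply]
      continuous_toFun := by
        refine (FiberBundle.continuous_proj F E).prodMk (L.continuous.comp ?_)
        refine continuousOn_univ.1 (hf.continuousOn_coeff (Set.mapsTo_univ TotalSpace.proj _) ?_)
        simp only [hb]
        exact continuousOn_id
      continuous_invFun := by
        simp only [hb_symm]
        exact continuousOn_univ.1 <| continuousOn_totalSpace_sum_smul continuousOn_fst
          (fun i => (hf.continuousOn i).comp continuousOn_fst (Set.mapsTo_univ _ _))
          (L.symm.continuous.comp continuous_snd).continuousOn }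
  exact ⟨⟨φ.toOpenPartialHomeomorph, Set.univ, isOpen_univ, rfl, by simp, fun _ _ => rfl⟩, rfl,
    ⟨fun x _ => ((b x).equivFun.trans L.toLinearEquiv).isLinear⟩⟩

end IsContinuousFrameOn

end Frame

section ExtendsToFrame

open Topology

variable {B F : Type*} {E : B → Type*} [TopologicalSpace B] [∀ x, AddCommGroup (E x)]
  [∀ x, Module ℝ (E x)] [TopologicalSpace (TotalSpace F E)] {n : ℕ} {s : ∀ x, E x}

variable (F n) in
/-- On `K`, the section `s` is the first member of a continuous frame with `n + 1` members. -/
def ExtendsToFrameOn (s : ∀ x, E x) (K : Set B) : Prop :=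
  ∃ f : Fin (n + 1) → ∀ x, E x, f 0 = s ∧ IsContinuousFrameOn ℝ F f K

theorem ExtendsToFrameOn.mono {K L : Set B} (hKL : K ⊆ L) (h : ExtendsToFrameOn F n s L) :
    ExtendsToFrameOn F n s K :=
  h.imp fun _ => And.imp_right (.mono hKL)

theorem extendsToFrameOn_empty : ExtendsToFrameOn F n s ∅ :=
  ⟨fun _ => s, rfl, ⟨fun _ => continuousOn_empty _, fun _ hx => hx.elim⟩⟩

variable [NormedAddCommGroup F] [NormedSpace ℝ F]

theorem exists_basis_apply_zero_eq (hF : Module.finrank ℝ F = n + 1) {v : F} (hv : v ≠ 0) :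
    ∃ b : Module.Basis (Fin (n + 1)) ℝ F, b 0 = v := by
  have : FiniteDimensional ℝ F := .of_finrank_pos (by lia)
  let b := Module.finBasisOfFinrankEq ℝ F hF
  obtain ⟨T, hT⟩ := SeparatingDual.exists_continuousLinearEquiv_apply_eq (R := ℝ) (b.ne_zero 0) hv
  exact ⟨b.map T.toLinearEquiv, hT⟩

variable [∀ x, TopologicalSpace (E x)] [FiberBundle F E] [VectorBundle ℝ F E]

theorem exists_mem_nhds_extendsToFrameOn (hF : Module.finrank ℝ F = n + 1)
    (hs : Continuous fun x => (⟨x, s x⟩ : TotalSpace F E)) {x₀ : B} (hs₀ : s x₀ ≠ 0) :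
    ∃ U ∈ 𝓝 x₀, ExtendsToFrameOn F n s U := by
  have : FiniteDimensional ℝ F := .of_finrank_pos (by lia)
  let e := trivializationAt F E x₀
  have hx₀ : x₀ ∈ e.baseSet := FiberBundle.mem_baseSet_trivializationAt _ _ _
  obtain ⟨b, hb⟩ := exists_basis_apply_zero_eq hF
    ((e.linearEquivAt ℝ x₀ hx₀).map_ne_zero_iff.2 hs₀)
  let f : Fin (n + 1) → ∀ x, E x := Fin.cons s fun i x => e.symm x (b i.succ)
  have hf (i : Fin (n + 1)) :
      ContinuousOn (fun x => (⟨x, f i x⟩ : TotalSpace F E)) e.baseSet := by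
    cases i using Fin.cases with
    | zero => exact hs.continuousOn
    | succ i =>
      refine (e.continuousOn_symm.comp (continuousOn_id.prodMk continuousOn_const)
        fun x hx => ⟨hx, trivial⟩).congr fun _ _ => rfl
  have hf₀ : (fun i => (e ⟨x₀, f i x₀⟩).2) = b := by
    funext i
    cases i using Fin.cases with
    | zero => exact hb.symm
    | succ i => simp only [f, Fin.cons_succ, e.apply_mk_symm hx₀]
  obtain ⟨U, hU, hfU⟩ := exists_mem_nhds_isContinuousFrameOn (𝕜 := ℝ)
    (e.open_baseSet.mem_nhds hx₀) hf
    ((linearIndependent_trivialization_iff e hx₀).1 (hf₀ ▸ b.linearIndependent))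
  exact ⟨U, hU, f, rfl, hfU⟩

theorem ExtendsToFrameOn.union [NormalSpace B] (hF : Module.finrank ℝ F = n + 1) {A C : Set B}
    (hAs : ExtendsToFrameOn F n s A) (hCs : ExtendsToFrameOn F n s C) (hA : IsClosed A)
    (hC : IsClosed C) (hAC : HasGLExtension n (A ∩ C)) : ExtendsToFrameOn F n s (A ∪ C) := by
  classical
  have : FiniteDimensional ℝ F := .of_finrank_pos (by lia)
  obtain ⟨f, hfs, hf⟩ := hAs
  obtain ⟨g, hgs, hg⟩ := hCs
  have hgAC := hg.mono (Set.inter_subset_right : A ∩ C ⊆ C)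
  obtain ⟨M, hM, hunit, hMgf⟩ := hgAC.exists_matrix_sum_smul_eq (hf.mono Set.inter_subset_left)
    (by simp only [Fintype.card_fin, hF])
  have hrow (x) (hx : x ∈ A ∩ C) : M x 0 = Pi.single 0 1 := by
    refine (hgAC.linearIndependent x hx).fintypeLinearCombination_injective ?_
    simp only [Fintype.linearCombination_apply, hMgf x hx 0, hfs, ← hgs, Pi.single_apply,
      ite_smul, one_smul, zero_smul, Finset.sum_ite_eq', Finset.mem_univ, if_true]
  obtain ⟨N, hN, hNunit, hNrow, hNM⟩ := hAC.exists_extension_of_row_zero (hA.inter hC) hM hunit hrow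
  let g' (i : Fin (n + 1)) (x : B) : E x := ∑ j, N x i j • g j x
  have hg' : IsContinuousFrameOn ℝ F g' C := hg.matrix_smul hN.continuousOn fun x _ => hNunit x
  have hg's : g' 0 = s := by
    funext x
    simp [g', hNrow x, Pi.single_apply, hgs]
  have hfg' (i) (x) (hx : x ∈ A ∩ C) : f i x = g' i x := by
    simp only [g', hNM hx, hMgf x hx i]
  refine ⟨fun i => A.piecewise (f i) (g' i), ?_, .union ?_ ?_ hA hC⟩
  · simp only [hfs, hg's, Set.piecewise_same]
  · exact hf.congr fun i x hx => Set.piecewise_eq_of_mem _ _ _ hx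
  · exact hg'.congr fun i => piecewise_eq_right_of_eq_on_inter (hfg' i)

theorem IsConvexCell.extendsToFrameOn {V : Type*} [NormedAddCommGroup V] [NormedSpace ℝ V]
    [FiniteDimensional ℝ V] [T2Space B] [NormalSpace B] {p : B → V} {A : Set B}
    (hA : IsConvexCell p A) (hF : Module.finrank ℝ F = 3)
    (hs : Continuous fun x => (⟨x, s x⟩ : TotalSpace F E)) (hs₀ : ∀ x ∈ A, s x ≠ 0) :
    ExtendsToFrameOn F 2 s A :=
  hA.induction_on extendsToFrameOn_empty (fun _ _ => .mono)
    (fun x hx => exists_mem_nhds_extendsToFrameOn hF hs (hs₀ x hx))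
    fun _ _ hK hL hKL hKs hLs =>
      hKs.union hF hLs hK.isCompact.isClosed hL.isCompact.isClosed <|
        hasGLExtension_two hKL.isCompact.isClosed hKL.isPreconnected hKL.hasContinuousLog

end ExtendsToFrame

theorem stmt_5_general {W F B : Type*} [NormedAddCommGroup W] [InnerProductSpace ℝ W]
    (hW : 4 ≤ Module.finrank ℝ W) [NormedAddCommGroup F] [NormedSpace ℝ F]
    (hF : Module.finrank ℝ F = 3) [TopologicalSpace B] (h : B ≃ₜ Metric.sphere (0 : W) 1)
    (E : B → Type*) [∀ x, AddCommGroup (E x)] [∀ x, Module ℝ (E x)] [∀ x, TopologicalSpace (E x)]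
    [TopologicalSpace (TotalSpace F E)] [FiberBundle F E] [VectorBundle ℝ F E] (s : ∀ x, E x)
    (hs : Continuous fun x => (⟨x, s x⟩ : TotalSpace F E)) (hnz : ∀ x, s x ≠ 0) :
    ∃ e : Trivialization F (TotalSpace.proj : TotalSpace F E → B),
      e.baseSet = Set.univ ∧ e.IsLinear ℝ := by
  have : FiniteDimensional ℝ F := .of_finrank_pos (by lia)
  have : FiniteDimensional ℝ W := .of_finrank_pos (by lia)
  have : Nontrivial W := Module.nontrivial_of_finrank_pos (R := ℝ) (by lia)
  have : T2Space B := h.symm.t2Space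
  have : CompactSpace B := h.symm.compactSpace
  obtain ⟨v, hv⟩ := exists_norm_eq W zero_le_one
  have hcell {w : W} (hw : ‖w‖ = 1) : ExtendsToFrameOn F 2 s (h ⁻¹' closedHemisphere w) :=
    ((isConvexCell_closedHemisphere hw).comp_homeomorph h).extendsToFrameOn hF hs fun x _ => hnz x
  have hclosed (w : W) : IsClosed (h ⁻¹' closedHemisphere w) :=
    (isClosed_closedHemisphere w).preimage h.continuous
  have hinter : h ⁻¹' closedHemisphere v ∩ h ⁻¹' closedHemisphere (-v) = h ⁻¹' equator v := by
    rw [← Set.preimage_inter, closedHemisphere_inter_neg]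
  have hGL : HasGLExtension 2 (h ⁻¹' equator v) :=
    hasGLExtension_two (hinter ▸ (hclosed v).inter (hclosed (-v)))
      (h.isPreconnected_preimage.2 (isPreconnected_equator hv (by lia)))
      ((hasContinuousLog_equator hv hW).of_homeomorph (h.sets rfl).symm)
  obtain ⟨f, -, hf⟩ := (hcell hv).union hF (hcell (by rwa [norm_neg])) (hclosed v) (hclosed (-v))
    (hinter ▸ hGL)
  rw [← Set.preimage_union, closedHemisphere_union_neg, Set.preimage_univ] at hf
  exact hf.exists_trivialization (by simp [hF])

/-- A rank 3 real vector bundle over the sphere `Sⁿ`, `n ≥ 3`, admitting a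
nowhere-zero continuous section is trivial (it admits a linear trivialization over the
whole base). -/
theorem stmt_5 (n : ℕ) (hn : 3 ≤ n)
    {B : Type*} [TopologicalSpace B]
    (hB : Nonempty (B ≃ₜ Metric.sphere (0 : EuclideanSpace ℝ (Fin (n + 1))) 1))
    (E : B → Type*) [∀ x, AddCommGroup (E x)] [∀ x, Module ℝ (E x)]
    [∀ x, TopologicalSpace (E x)]
    [TopologicalSpace (Bundle.TotalSpace (EuclideanSpace ℝ (Fin 3)) E)]
    [FiberBundle (EuclideanSpace ℝ (Fin 3)) E]
    [VectorBundle ℝ (EuclideanSpace ℝ (Fin 3)) E]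
    (s : ∀ x, E x)
    (hs : Continuous fun x => (⟨x, s x⟩ : Bundle.TotalSpace (EuclideanSpace ℝ (Fin 3)) E))
    (hnz : ∀ x, s x ≠ 0) :
    ∃ e : Trivialization (EuclideanSpace ℝ (Fin 3))
        (Bundle.TotalSpace.proj (F := EuclideanSpace ℝ (Fin 3)) (E := E)),
      e.baseSet = Set.univ ∧ e.IsLinear ℝ :=
  hB.elim fun h => stmt_5_general (by simpa using hn) finrank_euclideanSpace_fin h E s hs hnz
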